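/- Let g ∈ M satisfy E[g(D)] = 0 and let φ(g)(w) = −∫₀^∞ (T_u g)(w) du. Then for all w, h ∈ E: (A) ‖Dφ(g)(w)‖ ≤ ‖g‖_M (1 + (2/3)‖w‖² + (4/3)E[‖D‖²]); (B) ‖D²φ(g)(w)‖ ≤ ‖g‖_M (1/2 + ‖w‖/3 + E[‖D‖]/3); (C) ‖D²φ(g)(w+h) − D²φ(g)(w)‖ ≤ (‖h‖/3) · sup_{w',h'≠0} ‖D²g(w'+h') − D²g(w')‖/‖h'‖. -/

import Mathlib

open MeasureTheory ProbabilityTheory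

/-- The `M`-norm of `g`:
`‖g‖_M = sup_w |g w|/(1+‖w‖³) + sup_w ‖Dg w‖/(1+‖w‖²) + sup_w ‖D²g w‖/(1+‖w‖)
        + sup_{w,h} ‖D²g(w+h) − D²g(w)‖/‖h‖`. -/
noncomputable def Mnorm {E : Type*} [NormedAddCommGroup E] [NormedSpace ℝ E]
    (g : E → ℝ) : ℝ :=
  (⨆ w : E, |g w| / (1 + ‖w‖ ^ 3)) +
  (⨆ w : E, ‖fderiv ℝ g w‖ / (1 + ‖w‖ ^ 2)) +
  (⨆ w : E, ‖fderiv ℝ (fderiv ℝ g) w‖ / (1 + ‖w‖)) +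
  (⨆ w : E, ⨆ h : E,
    ‖fderiv ℝ (fderiv ℝ g) (w + h) - fderiv ℝ (fderiv ℝ g) w‖ / ‖h‖)

/-!
Formally `D^k φ(w) = -∫₀^∞ e^{-ku} E[D^k g(e^{-u} w + σ(u) D)] du`, so the factors `e^{-u}` produced
by the chain rule make every integral converge and the constants are the values of
`∫₀^∞ e^{-nu} σ(u)^k du`. For `k = 0` there is no such factor. Since `E[g(D)] = 0` one may subtract
`g(D)` from the integrand, and `e^{-u} w + σ(u) D` is within `e^{-u} (‖w‖ + ‖D‖)` of `D`. With this
correction `φ` is an absolutely convergent integral over `(0, ∞) × Ω`, which can be differentiated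
under the integral sign.
-/

open Filter Set Topology
open scoped NNReal ENNReal

section PolynomialGrowth

variable {E F : Type*} [NormedAddCommGroup E] [NormedAddCommGroup F]

/-- `f` grows at most like the `m`-th power of the norm: `‖f w‖ ≤ C (1 + ‖w‖ ^ m)` for some `C`. -/
def HasPolyGrowth (m : ℕ) (f : E → F) : Prop :=
  ∃ C : ℝ, ∀ w, ‖f w‖ ≤ C * (1 + ‖w‖ ^ m)

theorem nonneg_of_norm_le_mul_one_add_norm_pow {f : E → F} {C : ℝ} {m : ℕ}
    (hf : ∀ w, ‖f w‖ ≤ C * (1 + ‖w‖ ^ m)) : 0 ≤ C :=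
  nonneg_of_mul_nonneg_left ((norm_nonneg _).trans (hf 0)) (by positivity)

theorem le_one_add_pow_succ {t : ℝ} (ht : 0 ≤ t) (m : ℕ) : t ≤ 1 + t ^ (m + 1) := by
  rcases le_total t 1 with h | h
  · linarith [pow_nonneg ht (m + 1)]
  · linarith [le_self_pow₀ h (Nat.add_one_ne_zero m)]

theorem integrable_add_norm_pow {Ω : Type*} [MeasurableSpace Ω] {P : Measure Ω} [IsFiniteMeasure P]
    {Y : Ω → E} {m : ℕ} (hY : MemLp Y m P) {r : ℝ} (hr : 0 ≤ r) :
    Integrable (fun ω => (r + ‖Y ω‖) ^ m) P := by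
  refine ((memLp_const r).add hY.norm).integrable_norm_pow'.congr (.of_forall fun ω => ?_)
  simp only [Pi.add_apply]
  rw [Real.norm_of_nonneg (by positivity)]

namespace HasPolyGrowth

theorem of_lipschitzWith {f : E → F} {K : ℝ≥0} (hf : LipschitzWith K f) : HasPolyGrowth 1 f := by
  refine ⟨‖f 0‖ + K, fun w => ?_⟩
  have hfw : ‖f w - f 0‖ ≤ K * ‖w‖ := by simpa using hf.norm_sub_le w 0
  calc ‖f w‖ ≤ ‖f 0‖ + ‖f w - f 0‖ := norm_le_norm_add_norm_sub' _ _
    _ ≤ ‖f 0‖ * (1 + ‖w‖) + K * (1 + ‖w‖) := by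
        gcongr ?_ + ?_
        · exact le_mul_of_one_le_right (norm_nonneg _) (by linarith [norm_nonneg w])
        · exact hfw.trans (by gcongr; linarith)
    _ = (‖f 0‖ + K) * (1 + ‖w‖ ^ 1) := by ring

theorem norm_le_iSup_mul {f : E → F} {m : ℕ} (hf : HasPolyGrowth m f) (w : E) :
    ‖f w‖ ≤ (⨆ x, ‖f x‖ / (1 + ‖x‖ ^ m)) * (1 + ‖w‖ ^ m) := by
  obtain ⟨C, hC⟩ := hf
  rw [← div_le_iff₀ (by positivity)]
  refine le_ciSup (f := fun x => ‖f x‖ / (1 + ‖x‖ ^ m)) ⟨C, ?_⟩ w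
  rintro _ ⟨x, rfl⟩
  exact (div_le_iff₀ (by positivity)).2 (hC x)

theorem integrable_comp {f : E → F} {m : ℕ} (hf : HasPolyGrowth m f) (hfc : Continuous f)
    {Ω : Type*} [MeasurableSpace Ω] {P : Measure Ω} [IsFiniteMeasure P] {Y : Ω → E}
    (hY : MemLp Y m P) : Integrable (fun ω => f (Y ω)) P := by
  obtain ⟨C, hC⟩ := hf
  exact (((integrable_const 1).add hY.integrable_norm_pow').const_mul C).mono'
    (hfc.comp_aestronglyMeasurable hY.aestronglyMeasurable) (.of_forall fun ω => hC (Y ω))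

end HasPolyGrowth

variable [NormedSpace ℝ E] [NormedSpace ℝ F]

theorem norm_sub_le_of_norm_fderiv_le_mul_one_add_norm_pow {f : E → F} {C r : ℝ} {m : ℕ}
    (hf : Differentiable ℝ f) (hf' : ∀ w, ‖fderiv ℝ f w‖ ≤ C * (1 + ‖w‖ ^ m))
    {x y : E} (hx : ‖x‖ ≤ r) (hy : ‖y‖ ≤ r) :
    ‖f y - f x‖ ≤ C * (1 + r ^ m) * ‖y - x‖ := by
  have hC : 0 ≤ C := nonneg_of_norm_le_mul_one_add_norm_pow hf'
  refine (convex_closedBall (0 : E) r).norm_image_sub_le_of_norm_fderiv_le (𝕜 := ℝ)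
    (fun z _ => hf z) (fun z hz => (hf' z).trans ?_) (by simpa using hx) (by simpa using hy)
  gcongr
  simpa using hz

theorem HasPolyGrowth.of_fderiv {f : E → F} {m : ℕ} (hf : Differentiable ℝ f)
    (hf' : HasPolyGrowth m (fderiv ℝ f)) : HasPolyGrowth (m + 1) f := by
  obtain ⟨C, hC⟩ := hf'
  have hC₀ : 0 ≤ C := nonneg_of_norm_le_mul_one_add_norm_pow hC
  refine ⟨‖f 0‖ + 2 * C, fun w => ?_⟩
  have increment_le : ‖f w - f 0‖ ≤ C * (1 + ‖w‖ ^ m) * ‖w‖ := by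
    simpa using norm_sub_le_of_norm_fderiv_le_mul_one_add_norm_pow hf hC
      (x := 0) (by simp) le_rfl
  have hw : ‖w‖ ≤ 1 + ‖w‖ ^ (m + 1) := le_one_add_pow_succ (norm_nonneg w) m
  calc ‖f w‖ ≤ ‖f 0‖ + ‖f w - f 0‖ := norm_le_norm_add_norm_sub' _ _
    _ ≤ ‖f 0‖ + C * (1 + ‖w‖ ^ m) * ‖w‖ := by gcongr
    _ = ‖f 0‖ * 1 + C * (‖w‖ + ‖w‖ ^ (m + 1)) := by ring
    _ ≤ ‖f 0‖ * (1 + ‖w‖ ^ (m + 1)) + C * (2 * (1 + ‖w‖ ^ (m + 1))) := by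
        gcongr
        · exact le_add_of_nonneg_right (by positivity)
        · linarith
    _ = (‖f 0‖ + 2 * C) * (1 + ‖w‖ ^ (m + 1)) := by ring

end PolynomialGrowth

section SupremumNorms

theorem norm_add_sub_le_iSup_mul {E F : Type*} [NormedAddCommGroup E] [NormedAddCommGroup F]
    {f : E → F} {K : ℝ≥0} (hf : LipschitzWith K f) (w h : E) :
    ‖f (w + h) - f w‖ ≤ (⨆ w' : E, ⨆ h' : E, ‖f (w' + h') - f w'‖ / ‖h'‖) * ‖h‖ := by
  have quotient_le (w' h' : E) : ‖f (w' + h') - f w'‖ / ‖h'‖ ≤ K :=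
    div_le_of_le_mul₀ (norm_nonneg _) K.2 (by simpa using hf.norm_sub_le (w' + h') w')
  rcases eq_or_ne h 0 with rfl | hh
  · simp
  rw [← div_le_iff₀ (norm_pos_iff.2 hh)]
  calc ‖f (w + h) - f w‖ / ‖h‖ ≤ ⨆ h' : E, ‖f (w + h') - f w‖ / ‖h'‖ :=
        le_ciSup (f := fun h' => ‖f (w + h') - f w‖ / ‖h'‖)
          ⟨K, forall_mem_range.2 (quotient_le w)⟩ h
    _ ≤ ⨆ w' : E, ⨆ h' : E, ‖f (w' + h') - f w'‖ / ‖h'‖ :=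
        le_ciSup (f := fun w' => ⨆ h', ‖f (w' + h') - f w'‖ / ‖h'‖)
          ⟨K, forall_mem_range.2 fun w' => ciSup_le (quotient_le w')⟩ w

variable {E : Type*} [NormedAddCommGroup E] [NormedSpace ℝ E] {g : E → ℝ}

theorem iSup_norm_fderiv_div_le_Mnorm (g : E → ℝ) :
    (⨆ w : E, ‖fderiv ℝ g w‖ / (1 + ‖w‖ ^ 2)) ≤ Mnorm g ∧
      (⨆ w : E, ‖fderiv ℝ (fderiv ℝ g) w‖ / (1 + ‖w‖)) ≤ Mnorm g := by
  have value_nonneg : 0 ≤ ⨆ w : E, |g w| / (1 + ‖w‖ ^ 3) :=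
    Real.iSup_nonneg fun w => by positivity
  have fderiv_nonneg : 0 ≤ ⨆ w : E, ‖fderiv ℝ g w‖ / (1 + ‖w‖ ^ 2) :=
    Real.iSup_nonneg fun w => by positivity
  have fderiv_fderiv_nonneg : 0 ≤ ⨆ w : E, ‖fderiv ℝ (fderiv ℝ g) w‖ / (1 + ‖w‖) :=
    Real.iSup_nonneg fun w => by positivity
  have lipschitz_nonneg : 0 ≤ ⨆ w : E, ⨆ h : E,
      ‖fderiv ℝ (fderiv ℝ g) (w + h) - fderiv ℝ (fderiv ℝ g) w‖ / ‖h‖ :=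
    Real.iSup_nonneg fun w => Real.iSup_nonneg fun h => by positivity
  unfold Mnorm
  constructor <;> linarith

theorem norm_fderiv_le_Mnorm_mul (hg : HasPolyGrowth 2 (fderiv ℝ g)) (w : E) :
    ‖fderiv ℝ g w‖ ≤ Mnorm g * (1 + ‖w‖ ^ 2) :=
  (hg.norm_le_iSup_mul w).trans
    (mul_le_mul_of_nonneg_right (iSup_norm_fderiv_div_le_Mnorm g).1 (by positivity))

theorem norm_fderiv_fderiv_le_Mnorm_mul (hg : HasPolyGrowth 1 (fderiv ℝ (fderiv ℝ g))) (w : E) :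
    ‖fderiv ℝ (fderiv ℝ g) w‖ ≤ Mnorm g * (1 + ‖w‖ ^ 1) :=
  (hg.norm_le_iSup_mul w).trans
    (mul_le_mul_of_nonneg_right (by simpa using (iSup_norm_fderiv_div_le_Mnorm g).2)
      (by positivity))

end SupremumNorms

section MehlerScale

/-- The noise level `σ(u) = √(1 - e^{-2u})` of Mehler's formula at time `u`, for which
`e^{-u}` and `σ(u)` are the legs of a right triangle with unit hypotenuse. -/
noncomputable def mehlerScale (u : ℝ) : ℝ :=
  Real.sqrt (1 - Real.exp (-2 * u))

theorem mehlerScale_nonneg (u : ℝ) : 0 ≤ mehlerScale u :=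
  Real.sqrt_nonneg _

@[fun_prop]
theorem continuous_mehlerScale : Continuous mehlerScale := by
  unfold mehlerScale
  fun_prop

theorem exp_neg_two_mul (u : ℝ) : Real.exp (-2 * u) = Real.exp (-u) ^ 2 := by
  rw [← Real.exp_nat_mul]
  congr 1
  push_cast
  ring

theorem exp_neg_le_one {u : ℝ} (hu : 0 ≤ u) : Real.exp (-u) ≤ 1 :=
  Real.exp_le_one_iff.2 (neg_nonpos.2 hu)

theorem mehlerScale_sq {u : ℝ} (hu : 0 ≤ u) : mehlerScale u ^ 2 = 1 - Real.exp (-u) ^ 2 := by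
  rw [mehlerScale, exp_neg_two_mul, Real.sq_sqrt]
  exact sub_nonneg.2 (pow_le_one₀ (Real.exp_nonneg _) (exp_neg_le_one hu))

theorem mehlerScale_le_one (u : ℝ) : mehlerScale u ≤ 1 :=
  Real.sqrt_le_one.2 (sub_le_self 1 (Real.exp_nonneg _))

theorem one_sub_mehlerScale_le_exp_neg {u : ℝ} (hu : 0 ≤ u) :
    1 - mehlerScale u ≤ Real.exp (-u) := by
  nlinarith [mehlerScale_sq hu, mehlerScale_nonneg u, mehlerScale_le_one u, exp_neg_le_one hu,
    Real.exp_pos (-u)]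

theorem hasDerivAt_mehlerScale {u : ℝ} (hu : 0 < u) :
    HasDerivAt mehlerScale (Real.exp (-u) ^ 2 / mehlerScale u) u := by
  have radicand_pos : 0 < 1 - Real.exp (-2 * u) :=
    sub_pos.2 (Real.exp_lt_one_iff.2 (by linarith))
  have radicand_deriv :
      HasDerivAt (fun u : ℝ => 1 - Real.exp (-2 * u)) (2 * Real.exp (-u) ^ 2) u := by
    refine (((hasDerivAt_id u).const_mul (-2)).exp.const_sub 1).congr_deriv ?_
    rw [← exp_neg_two_mul]
    simp [mul_comm]
  refine (radicand_deriv.sqrt radicand_pos.ne').congr_deriv ?_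
  exact mul_div_mul_left _ _ two_ne_zero

theorem tendsto_mehlerScale_atTop : Tendsto mehlerScale atTop (𝓝 1) := by
  have exp_tendsto : Tendsto (fun u : ℝ => Real.exp (-2 * u)) atTop (𝓝 0) :=
    Real.tendsto_exp_atBot.comp (tendsto_id.const_mul_atTop_of_neg (by norm_num))
  have scale_tendsto := (exp_tendsto.const_sub 1).sqrt
  rwa [sub_zero, Real.sqrt_one] at scale_tendsto

theorem exp_neg_pow (n : ℕ) (u : ℝ) : Real.exp (-u) ^ n = Real.exp (-(n : ℝ) * u) := by
  rw [← Real.exp_nat_mul]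
  congr 1
  ring

theorem integrableOn_exp_neg_pow {n : ℕ} (hn : n ≠ 0) :
    IntegrableOn (fun u : ℝ => Real.exp (-u) ^ n) (Ioi 0) := by
  simp only [exp_neg_pow]
  exact integrableOn_exp_mul_Ioi (by simpa using hn.bot_lt) 0

theorem integral_exp_neg_pow {n : ℕ} (hn : n ≠ 0) :
    ∫ u in Ioi (0 : ℝ), Real.exp (-u) ^ n = 1 / n := by
  simp only [exp_neg_pow]
  rw [integral_exp_mul_Ioi (by simpa using hn.bot_lt) 0]
  simp

theorem integrableOn_exp_neg_pow_add_const_mul {n k : ℕ} (hn : n ≠ 0) (hk : k ≠ 0) (c : ℝ) :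
    IntegrableOn (fun u : ℝ => Real.exp (-u) ^ n + c * Real.exp (-u) ^ k) (Ioi 0) :=
  (integrableOn_exp_neg_pow hn).add ((integrableOn_exp_neg_pow hk).const_mul c)

theorem integral_exp_neg_pow_add_const_mul {n k : ℕ} (hn : n ≠ 0) (hk : k ≠ 0) (c : ℝ) :
    ∫ u in Ioi (0 : ℝ), (Real.exp (-u) ^ n + c * Real.exp (-u) ^ k) = 1 / n + c * (1 / k) := by
  rw [integral_add (integrableOn_exp_neg_pow hn) ((integrableOn_exp_neg_pow hk).const_mul c),
    integral_const_mul, integral_exp_neg_pow hn, integral_exp_neg_pow hk]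

theorem integrableOn_exp_neg_pow_mul_mehlerScale_pow {n : ℕ} (hn : n ≠ 0) (k : ℕ) :
    IntegrableOn (fun u => Real.exp (-u) ^ n * mehlerScale u ^ k) (Ioi 0) := by
  refine (integrableOn_exp_neg_pow hn).mono'
    (Continuous.aestronglyMeasurable (by fun_prop)) (.of_forall fun u => ?_)
  have scale_pow_le : mehlerScale u ^ k ≤ 1 :=
    pow_le_one₀ (mehlerScale_nonneg u) (mehlerScale_le_one u)
  rw [Real.norm_of_nonneg (mul_nonneg (by positivity) (pow_nonneg (mehlerScale_nonneg u) k))]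
  exact mul_le_of_le_one_right (by positivity) scale_pow_le

theorem integral_exp_neg_sq_mul_mehlerScale_pow (k : ℕ) :
    ∫ u in Ioi (0 : ℝ), Real.exp (-u) ^ 2 * mehlerScale u ^ k = 1 / (k + 2) := by
  have antideriv (u : ℝ) (hu : u ∈ Ioi (0 : ℝ)) :
      HasDerivAt (fun u => mehlerScale u ^ (k + 2) / (k + 2))
        (Real.exp (-u) ^ 2 * mehlerScale u ^ k) u := by
    have scale_ne : mehlerScale u ≠ 0 :=
      (Real.sqrt_pos.2 (sub_pos.2 (Real.exp_lt_one_iff.2 (by linarith [mem_Ioi.1 hu])))).ne'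
    refine (((hasDerivAt_mehlerScale hu).pow (k + 2)).div_const _).congr_deriv ?_
    push_cast
    field_simp
    ring
  rw [integral_Ioi_of_hasDerivAt_of_tendsto (Continuous.continuousWithinAt (by fun_prop)) antideriv
    (integrableOn_exp_neg_pow_mul_mehlerScale_pow two_ne_zero k)
    ((tendsto_mehlerScale_atTop.pow (k + 2)).div_const _)]
  simp [mehlerScale]

theorem integral_exp_neg_mul_mehlerScale_sq :
    ∫ u in Ioi (0 : ℝ), Real.exp (-u) * mehlerScale u ^ 2 = 2 / 3 := by
  have integrand_eq : EqOn (fun u => Real.exp (-u) * mehlerScale u ^ 2)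
      (fun u => Real.exp (-u) ^ 1 - Real.exp (-u) ^ 3) (Ioi 0) := fun u hu => by
    simp only [mehlerScale_sq (mem_Ioi.1 hu).le]
    ring
  rw [setIntegral_congr_fun measurableSet_Ioi integrand_eq,
    integral_sub (integrableOn_exp_neg_pow one_ne_zero) (integrableOn_exp_neg_pow three_ne_zero),
    integral_exp_neg_pow one_ne_zero, integral_exp_neg_pow three_ne_zero]
  norm_num

end MehlerScale

section MehlerPoint

variable {E : Type*} [NormedAddCommGroup E] [NormedSpace ℝ E]

/-- The point `e^{-u} w + σ(u) x` at which Mehler's formula evaluates a function: it moves from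
`w` at `u = 0` to `x` as `u → ∞`. -/
noncomputable def mehlerPoint (u : ℝ) (w x : E) : E :=
  Real.exp (-u) • w + mehlerScale u • x

theorem mehlerPoint_add (u : ℝ) (w h x : E) :
    mehlerPoint u (w + h) x = mehlerPoint u w x + Real.exp (-u) • h := by
  rw [mehlerPoint, mehlerPoint, smul_add, add_right_comm]

theorem hasFDerivAt_mehlerPoint (u : ℝ) (w x : E) :
    HasFDerivAt (fun w => mehlerPoint u w x) (Real.exp (-u) • ContinuousLinearMap.id ℝ E) w :=
  ((hasFDerivAt_id w).const_smul _).add_const _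

theorem norm_mehlerPoint_le (u : ℝ) (w x : E) :
    ‖mehlerPoint u w x‖ ≤ Real.exp (-u) * ‖w‖ + mehlerScale u * ‖x‖ := by
  refine (norm_add_le _ _).trans_eq ?_
  rw [norm_smul, norm_smul, Real.norm_of_nonneg (Real.exp_nonneg _),
    Real.norm_of_nonneg (mehlerScale_nonneg u)]

theorem norm_mehlerPoint_le_add {u : ℝ} (hu : 0 ≤ u) (w x : E) :
    ‖mehlerPoint u w x‖ ≤ ‖w‖ + ‖x‖ :=
  (norm_mehlerPoint_le u w x).trans <| add_le_add
    (mul_le_of_le_one_left (norm_nonneg w) (exp_neg_le_one hu))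
    (mul_le_of_le_one_left (norm_nonneg x) (mehlerScale_le_one u))

theorem norm_mehlerPoint_sub_le {u : ℝ} (hu : 0 ≤ u) (w x : E) :
    ‖mehlerPoint u w x - x‖ ≤ Real.exp (-u) * (‖w‖ + ‖x‖) := by
  have displacement_eq :
      mehlerPoint u w x - x = Real.exp (-u) • w - (1 - mehlerScale u) • x := by
    rw [mehlerPoint, sub_smul, one_smul]
    abel
  calc ‖mehlerPoint u w x - x‖ ≤ Real.exp (-u) * ‖w‖ + (1 - mehlerScale u) * ‖x‖ := by
        rw [displacement_eq]
        refine (norm_sub_le _ _).trans_eq ?_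
        rw [norm_smul, norm_smul, Real.norm_of_nonneg (Real.exp_nonneg _),
          Real.norm_of_nonneg (sub_nonneg.2 (mehlerScale_le_one u))]
    _ ≤ Real.exp (-u) * (‖w‖ + ‖x‖) := by
        rw [mul_add]
        gcongr
        exact one_sub_mehlerScale_le_exp_neg hu

theorem norm_mehlerPoint_pow_le (u : ℝ) (w x : E) (m : ℕ) :
    ‖mehlerPoint u w x‖ ^ m ≤
      2 ^ (m - 1) * (Real.exp (-u) ^ m * ‖w‖ ^ m + mehlerScale u ^ m * ‖x‖ ^ m) := by
  have hscale := mehlerScale_nonneg u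
  calc ‖mehlerPoint u w x‖ ^ m ≤ (Real.exp (-u) * ‖w‖ + mehlerScale u * ‖x‖) ^ m := by
        gcongr
        exact norm_mehlerPoint_le u w x
    _ ≤ 2 ^ (m - 1) * ((Real.exp (-u) * ‖w‖) ^ m + (mehlerScale u * ‖x‖) ^ m) :=
        add_pow_le (by positivity) (by positivity) m
    _ = _ := by rw [mul_pow, mul_pow]

end MehlerPoint

section MehlerIntegral

/-- Lebesgue measure on the time axis `(0, ∞)`. -/
noncomputable abbrev halfLineVolume : Measure ℝ :=
  volume.restrict (Ioi 0)

variable {E F Ω : Type*} [NormedAddCommGroup E] [NormedAddCommGroup F] [NormedSpace ℝ F]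
  [MeasurableSpace Ω] {P : Measure Ω} {D : Ω → E} {H : E → F} {C : ℝ} {m : ℕ}

theorem ae_halfLineVolume_prod_fst_pos : ∀ᵐ p ∂halfLineVolume.prod P, 0 < p.1 :=
  Measure.quasiMeasurePreserving_fst.ae (ae_restrict_mem measurableSet_Ioi)

theorem integrable_exp_neg_pow_mul_one_add_add_norm_pow [IsFiniteMeasure P] (hD : MemLp D m P)
    {n : ℕ} (hn : n ≠ 0) (C : ℝ) {r : ℝ} (hr : 0 ≤ r) :
    Integrable (fun p : ℝ × Ω => Real.exp (-p.1) ^ n * (C * (1 + (r + ‖D p.2‖) ^ m)))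
      (halfLineVolume.prod P) :=
  (integrableOn_exp_neg_pow hn).mul_prod
    (((integrable_const 1).add (integrable_add_norm_pow hD hr)).const_mul C)

variable [NormedSpace ℝ E]

/-- The expected time integral `∫₀^∞ e^{-nu} E[H(e^{-u} w + σ(u) D)] du`, written as one integral
over `(0, ∞) × Ω`. For `n ≥ 1` and `H` the `n`-th derivative of `G`, it is minus the `n`-th
derivative of the Stein solution of `G`. -/
noncomputable def mehlerIntegral (P : Measure Ω) (D : Ω → E) (n : ℕ) (H : E → F) (w : E) : F :=
  ∫ p : ℝ × Ω, Real.exp (-p.1) ^ n • H (mehlerPoint p.1 w (D p.2)) ∂halfLineVolume.prod P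

theorem aestronglyMeasurable_mehlerPoint (hD : AEStronglyMeasurable D P) (w : E) :
    AEStronglyMeasurable (fun p : ℝ × Ω => mehlerPoint p.1 w (D p.2)) (halfLineVolume.prod P) := by
  have exp_meas : AEStronglyMeasurable (fun p : ℝ × Ω => Real.exp (-p.1))
      (halfLineVolume.prod P) := by
    fun_prop
  have scale_meas : AEStronglyMeasurable (fun p : ℝ × Ω => mehlerScale p.1)
      (halfLineVolume.prod P) :=
    (continuous_mehlerScale.measurable.comp measurable_fst).aestronglyMeasurable
  exact (exp_meas.smul_const w).add (scale_meas.smul hD.comp_snd)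

theorem memLp_mehlerPoint [IsFiniteMeasure P] {q : ℝ≥0∞} (hD : MemLp D q P) (u : ℝ) (w : E) :
    MemLp (fun ω => mehlerPoint u w (D ω)) q P :=
  (memLp_const (Real.exp (-u) • w)).add (hD.const_smul (mehlerScale u))

theorem norm_exp_neg_pow_smul_mehlerPoint_le (hH : ∀ w, ‖H w‖ ≤ C * (1 + ‖w‖ ^ m)) (n : ℕ)
    {u r : ℝ} (hu : 0 ≤ u) {w : E} (hw : ‖w‖ ≤ r) (x : E) :
    ‖Real.exp (-u) ^ n • H (mehlerPoint u w x)‖ ≤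
      Real.exp (-u) ^ n * (C * (1 + (r + ‖x‖) ^ m)) := by
  have hC : 0 ≤ C := nonneg_of_norm_le_mul_one_add_norm_pow hH
  rw [norm_smul, Real.norm_of_nonneg (by positivity)]
  gcongr
  refine (hH _).trans ?_
  gcongr
  exact (norm_mehlerPoint_le_add hu w x).trans (by gcongr)

theorem integrable_exp_neg_pow_smul_mehlerPoint [IsFiniteMeasure P] (hD : MemLp D m P)
    (hHc : Continuous H) (hH : HasPolyGrowth m H) {n : ℕ} (hn : n ≠ 0) (w : E) :
    Integrable (fun p : ℝ × Ω => Real.exp (-p.1) ^ n • H (mehlerPoint p.1 w (D p.2)))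
      (halfLineVolume.prod P) := by
  obtain ⟨C, hC⟩ := hH
  have exp_meas : AEStronglyMeasurable (fun p : ℝ × Ω => Real.exp (-p.1) ^ n)
      (halfLineVolume.prod P) := by
    fun_prop
  refine (integrable_exp_neg_pow_mul_one_add_add_norm_pow hD hn C (norm_nonneg w)).mono'
    (exp_meas.smul (hHc.comp_aestronglyMeasurable
      (aestronglyMeasurable_mehlerPoint hD.aestronglyMeasurable w))) ?_
  filter_upwards [ae_halfLineVolume_prod_fst_pos] with p hp
  exact norm_exp_neg_pow_smul_mehlerPoint_le hC n hp.le le_rfl (D p.2)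

-- The correction `R` makes room for `n = 0`, where `H (mehlerPoint p.1 w (D p.2))` alone does not
-- decay in time.
theorem hasFDerivAt_integral_exp_neg_pow_smul_mehlerPoint [IsFiniteMeasure P] (hD : MemLp D m P)
    (hH : Differentiable ℝ H) (hH'c : Continuous (fderiv ℝ H))
    (hH' : HasPolyGrowth m (fderiv ℝ H)) (n : ℕ) (R : ℝ × Ω → F)
    (hint : ∀ w, Integrable
      (fun p : ℝ × Ω => Real.exp (-p.1) ^ n • H (mehlerPoint p.1 w (D p.2)) - R p)
      (halfLineVolume.prod P)) (w : E) :
    HasFDerivAt (fun w => ∫ p : ℝ × Ω,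
        (Real.exp (-p.1) ^ n • H (mehlerPoint p.1 w (D p.2)) - R p) ∂halfLineVolume.prod P)
      (mehlerIntegral P D (n + 1) (fderiv ℝ H) w) w := by
  have integrable_deriv :=
    integrable_exp_neg_pow_smul_mehlerPoint hD hH'c hH' n.succ_ne_zero w
  obtain ⟨C, hC⟩ := hH'
  refine hasFDerivAt_integral_of_dominated_of_fderiv_le
    (F' := fun w p => Real.exp (-p.1) ^ (n + 1) • fderiv ℝ H (mehlerPoint p.1 w (D p.2)))
    (Metric.ball_mem_nhds w one_pos) (.of_forall fun x => (hint x).aestronglyMeasurable) (hint w)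
    integrable_deriv.aestronglyMeasurable ?_
    (integrable_exp_neg_pow_mul_one_add_add_norm_pow hD n.succ_ne_zero C
      (by positivity : 0 ≤ ‖w‖ + 1)) (.of_forall fun p x _ => ?_)
  · filter_upwards [ae_halfLineVolume_prod_fst_pos] with p hp x hx
    exact norm_exp_neg_pow_smul_mehlerPoint_le hC (n + 1) hp.le
      (norm_lt_of_mem_ball hx).le (D p.2)
  · have chain_rule := (hH _).hasFDerivAt.comp x (hasFDerivAt_mehlerPoint p.1 x (D p.2))
    refine ((chain_rule.const_smul (Real.exp (-p.1) ^ n)).sub_const (R p)).congr_fderiv ?_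
    ext v
    simp [pow_succ, mul_smul]

variable [IsProbabilityMeasure P]

theorem norm_mehlerIntegral_le (hD : MemLp D m P)
    (hH : ∀ w, ‖H w‖ ≤ C * (1 + ‖w‖ ^ m)) {n : ℕ} (hn : n ≠ 0) (w : E) :
    ‖mehlerIntegral P D n H w‖ ≤
      C * (1 / n + 2 ^ (m - 1) * (‖w‖ ^ m / (n + m) +
        (∫ u in Ioi (0 : ℝ), Real.exp (-u) ^ n * mehlerScale u ^ m) * ∫ ω, ‖D ω‖ ^ m ∂P)) := by
  have hC : 0 ≤ C := nonneg_of_norm_le_mul_one_add_norm_pow hH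
  have hnm : n + m ≠ 0 := by positivity
  have time_integrable := integrableOn_exp_neg_pow_add_const_mul hn hnm (2 ^ (m - 1) * ‖w‖ ^ m)
  have noise_integrable : Integrable (fun p : ℝ × Ω =>
      Real.exp (-p.1) ^ n * mehlerScale p.1 ^ m * ‖D p.2‖ ^ m) (halfLineVolume.prod P) :=
    (integrableOn_exp_neg_pow_mul_mehlerScale_pow hn m).mul_prod hD.integrable_norm_pow'
  refine (norm_integral_le_of_norm_le (((time_integrable.comp_fst P).add
    (noise_integrable.const_mul (2 ^ (m - 1)))).const_mul C)
    (.of_forall fun p => ?_)).trans_eq ?_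
  · rw [norm_smul, Real.norm_of_nonneg (by positivity)]
    calc Real.exp (-p.1) ^ n * ‖H (mehlerPoint p.1 w (D p.2))‖
        ≤ Real.exp (-p.1) ^ n * (C * (1 + 2 ^ (m - 1) *
            (Real.exp (-p.1) ^ m * ‖w‖ ^ m + mehlerScale p.1 ^ m * ‖D p.2‖ ^ m))) := by
          gcongr
          refine (hH _).trans ?_
          gcongr
          exact norm_mehlerPoint_pow_le _ _ _ m
      _ = _ := by
          simp only [Pi.add_apply]
          ring
  · rw [integral_const_mul,
      integral_add' (time_integrable.comp_fst P) (noise_integrable.const_mul _),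
      integral_fun_fst (fun u : ℝ => Real.exp (-u) ^ n +
        2 ^ (m - 1) * ‖w‖ ^ m * Real.exp (-u) ^ (n + m)), probReal_univ, one_smul,
      integral_exp_neg_pow_add_const_mul hn hnm, integral_const_mul,
      integral_prod_mul (fun u => Real.exp (-u) ^ n * mehlerScale u ^ m) fun ω => ‖D ω‖ ^ m,
      Nat.cast_add]
    ring

theorem norm_mehlerIntegral_add_sub_le {K : ℝ} (hD : MemLp D m P)
    (hHc : Continuous H) (hH : HasPolyGrowth m H) (hK : ∀ w h, ‖H (w + h) - H w‖ ≤ K * ‖h‖)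
    {n : ℕ} (hn : n ≠ 0) (w h : E) :
    ‖mehlerIntegral P D n H (w + h) - mehlerIntegral P D n H w‖ ≤ ‖h‖ / (n + 1) * K := by
  have exp_integrable := integrableOn_exp_neg_pow n.succ_ne_zero
  rw [mehlerIntegral, mehlerIntegral,
    ← integral_sub (integrable_exp_neg_pow_smul_mehlerPoint hD hHc hH hn _)
    (integrable_exp_neg_pow_smul_mehlerPoint hD hHc hH hn _)]
  refine (norm_integral_le_of_norm_le ((exp_integrable.comp_fst P).mul_const (K * ‖h‖))
    (.of_forall fun p => ?_)).trans_eq ?_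
  · rw [← smul_sub, norm_smul, Real.norm_of_nonneg (by positivity), mehlerPoint_add]
    calc Real.exp (-p.1) ^ n *
          ‖H (mehlerPoint p.1 w (D p.2) + Real.exp (-p.1) • h) - H (mehlerPoint p.1 w (D p.2))‖
        ≤ Real.exp (-p.1) ^ n * (K * ‖Real.exp (-p.1) • h‖) := by gcongr; exact hK _ _
      _ = Real.exp (-p.1) ^ (n + 1) * (K * ‖h‖) := by
          rw [norm_smul, Real.norm_of_nonneg (Real.exp_nonneg _)]
          ring
  · rw [integral_mul_const, integral_fun_fst (fun u : ℝ => Real.exp (-u) ^ (n + 1)),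
      integral_exp_neg_pow n.succ_ne_zero, probReal_univ, one_smul]
    push_cast
    ring

end MehlerIntegral

section SteinSolution

variable {E F Ω : Type*} [NormedAddCommGroup E] [NormedSpace ℝ E] [NormedAddCommGroup F]
  [NormedSpace ℝ F] [MeasurableSpace Ω] {P : Measure Ω} {D : Ω → E} {G : E → F} {m : ℕ}

/-- The Mehler-type semigroup `(T_u G)(w) = E[G(e^{-u} w + σ(u) D)]`. -/
noncomputable def mehlerSemigroup (P : Measure Ω) (D : Ω → E) (G : E → F) (u : ℝ) (w : E) : F :=
  ∫ ω, G (mehlerPoint u w (D ω)) ∂P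

/-- The candidate solution `φ(G)(w) = -∫₀^∞ (T_u G)(w) du` of the Stein equation associated with
the Mehler-type semigroup of `D`. -/
noncomputable def steinSolution (P : Measure Ω) (D : Ω → E) (G : E → F) (w : E) : F :=
  -∫ u in Ioi (0 : ℝ), mehlerSemigroup P D G u w

variable [IsFiniteMeasure P]

theorem integrable_mehlerPoint_sub (hD : MemLp D (m + 1 : ℕ) P) (hG : Differentiable ℝ G)
    (hG' : HasPolyGrowth m (fderiv ℝ G)) (w : E) :
    Integrable (fun p : ℝ × Ω => G (mehlerPoint p.1 w (D p.2)) - G (D p.2))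
      (halfLineVolume.prod P) := by
  obtain ⟨C, hC⟩ := hG'
  have hC₀ : 0 ≤ C := nonneg_of_norm_le_mul_one_add_norm_pow hC
  have radius_integrable : Integrable (fun ω => ‖w‖ + ‖D ω‖) P :=
    (integrable_const _).add (hD.integrable (by simp)).norm
  have dominating_integrable : Integrable (fun p : ℝ × Ω =>
      Real.exp (-p.1) ^ 1 * (C * ((‖w‖ + ‖D p.2‖) + (‖w‖ + ‖D p.2‖) ^ (m + 1))))
      (halfLineVolume.prod P) :=
    (integrableOn_exp_neg_pow one_ne_zero).mul_prod
      ((radius_integrable.add (integrable_add_norm_pow hD (norm_nonneg w))).const_mul C)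
  refine dominating_integrable.mono'
    ((hG.continuous.comp_aestronglyMeasurable
      (aestronglyMeasurable_mehlerPoint hD.aestronglyMeasurable w)).sub
      (hG.continuous.comp_aestronglyMeasurable hD.aestronglyMeasurable.comp_snd)) ?_
  filter_upwards [ae_halfLineVolume_prod_fst_pos] with p hp
  calc ‖G (mehlerPoint p.1 w (D p.2)) - G (D p.2)‖
      ≤ C * (1 + (‖w‖ + ‖D p.2‖) ^ m) * ‖mehlerPoint p.1 w (D p.2) - D p.2‖ :=
        norm_sub_le_of_norm_fderiv_le_mul_one_add_norm_pow hG hC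
          (le_add_of_nonneg_left (norm_nonneg w)) (norm_mehlerPoint_le_add hp.le w _)
    _ ≤ C * (1 + (‖w‖ + ‖D p.2‖) ^ m) * (Real.exp (-p.1) * (‖w‖ + ‖D p.2‖)) := by
        gcongr
        exact norm_mehlerPoint_sub_le hp.le w _
    _ = Real.exp (-p.1) ^ 1 * (C * ((‖w‖ + ‖D p.2‖) + (‖w‖ + ‖D p.2‖) ^ (m + 1))) := by ring

theorem steinSolution_eq_neg_integral_prod (hD : MemLp D (m + 1 : ℕ) P) (hG : Differentiable ℝ G)
    (hG' : HasPolyGrowth m (fderiv ℝ G)) (hmean : ∫ ω, G (D ω) ∂P = 0) (w : E) :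
    steinSolution P D G w =
      -∫ p : ℝ × Ω, (G (mehlerPoint p.1 w (D p.2)) - G (D p.2)) ∂halfLineVolume.prod P := by
  have growth : HasPolyGrowth (m + 1) G := .of_fderiv hG hG'
  have inner_integral (u : ℝ) :
      ∫ ω, (G (mehlerPoint u w (D ω)) - G (D ω)) ∂P = mehlerSemigroup P D G u w := by
    rw [integral_sub (growth.integrable_comp hG.continuous (memLp_mehlerPoint hD u w))
      (growth.integrable_comp hG.continuous hD), hmean, sub_zero, mehlerSemigroup]
  rw [integral_prod _ (integrable_mehlerPoint_sub hD hG hG' w)]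
  simp only [inner_integral, steinSolution]

theorem hasFDerivAt_steinSolution (hD : MemLp D (m + 1 : ℕ) P) (hG : Differentiable ℝ G)
    (hG'c : Continuous (fderiv ℝ G)) (hG' : HasPolyGrowth m (fderiv ℝ G))
    (hmean : ∫ ω, G (D ω) ∂P = 0) (w : E) :
    HasFDerivAt (steinSolution P D G)
      (-mehlerIntegral P D 1 (fderiv ℝ G) w) w := by
  have hDm : MemLp D m P := hD.mono_exponent (by norm_cast; exact m.le_succ)
  have regularized := (hasFDerivAt_integral_exp_neg_pow_smul_mehlerPoint hDm hG hG'c hG' 0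
    (fun p => G (D p.2)) (by simpa using integrable_mehlerPoint_sub hD hG hG') w).neg
  simp only [pow_zero, one_smul] at regularized
  exact regularized.congr_of_eventuallyEq
    (.of_forall (steinSolution_eq_neg_integral_prod hD hG hG' hmean))

theorem hasFDerivAt_fderiv_steinSolution (hD : MemLp D (m + 2 : ℕ) P) (hG₁ : Differentiable ℝ G)
    (hG₂ : Differentiable ℝ (fderiv ℝ G)) (hG''c : Continuous (fderiv ℝ (fderiv ℝ G)))
    (hG'' : HasPolyGrowth m (fderiv ℝ (fderiv ℝ G))) (hmean : ∫ ω, G (D ω) ∂P = 0) (w : E) :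
    HasFDerivAt (fderiv ℝ (steinSolution P D G))
      (-mehlerIntegral P D 2 (fderiv ℝ (fderiv ℝ G)) w) w := by
  have hDm : MemLp D m P := hD.mono_exponent (by norm_cast; lia)
  have hDm' : MemLp D (m + 1 : ℕ) P := hD.mono_exponent (by norm_cast; lia)
  have growth : HasPolyGrowth (m + 1) (fderiv ℝ G) := .of_fderiv hG₂ hG''
  have fderiv_integral := (hasFDerivAt_integral_exp_neg_pow_smul_mehlerPoint hDm hG₂ hG''c hG'' 1
    (fun _ => 0) (by simpa using
      integrable_exp_neg_pow_smul_mehlerPoint hDm' hG₂.continuous growth one_ne_zero) w).neg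
  simp only [sub_zero] at fderiv_integral
  exact fderiv_integral.congr_of_eventuallyEq (.of_forall fun x =>
    (hasFDerivAt_steinSolution hD hG₁ hG₂.continuous growth hmean x).fderiv)

end SteinSolution

section SteinBounds

variable {E F Ω : Type*} [NormedAddCommGroup E] [NormedSpace ℝ E] [NormedAddCommGroup F]
  [NormedSpace ℝ F] [MeasurableSpace Ω] {P : Measure Ω} [IsProbabilityMeasure P] {D : Ω → E}
  {G : E → F}

theorem norm_fderiv_steinSolution_le (hD : MemLp D 3 P) (hG : Differentiable ℝ G)
    (hG'c : Continuous (fderiv ℝ G)) {C : ℝ} (hC : ∀ w, ‖fderiv ℝ G w‖ ≤ C * (1 + ‖w‖ ^ 2))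
    (hmean : ∫ ω, G (D ω) ∂P = 0) (w : E) :
    ‖fderiv ℝ (steinSolution P D G) w‖ ≤
      C * (1 + 2 / 3 * ‖w‖ ^ 2 + 4 / 3 * ∫ ω, ‖D ω‖ ^ 2 ∂P) := by
  have hD₂ : MemLp D (2 : ℕ) P := hD.mono_exponent (by norm_num)
  rw [(hasFDerivAt_steinSolution (m := 2) (mod_cast hD) hG hG'c ⟨C, hC⟩ hmean w).fderiv, norm_neg]
  refine (norm_mehlerIntegral_le hD₂ hC one_ne_zero w).trans_eq ?_
  simp only [pow_one, integral_exp_neg_mul_mehlerScale_sq]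
  push_cast
  ring

theorem norm_fderiv_fderiv_steinSolution_le (hD : MemLp D 3 P) (hG₁ : Differentiable ℝ G)
    (hG₂ : Differentiable ℝ (fderiv ℝ G)) (hG''c : Continuous (fderiv ℝ (fderiv ℝ G))) {C : ℝ}
    (hC : ∀ w, ‖fderiv ℝ (fderiv ℝ G) w‖ ≤ C * (1 + ‖w‖ ^ 1)) (hmean : ∫ ω, G (D ω) ∂P = 0)
    (w : E) :
    ‖fderiv ℝ (fderiv ℝ (steinSolution P D G)) w‖ ≤
      C * (1 / 2 + ‖w‖ / 3 + (∫ ω, ‖D ω‖ ∂P) / 3) := by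
  have hD₁ : MemLp D (1 : ℕ) P := hD.mono_exponent (by norm_num)
  rw [(hasFDerivAt_fderiv_steinSolution (m := 1) (mod_cast hD) hG₁ hG₂ hG''c ⟨C, hC⟩
    hmean w).fderiv]
  refine (norm_neg (mehlerIntegral P D 2 (fderiv ℝ (fderiv ℝ G)) w)).trans_le <|
    (norm_mehlerIntegral_le hD₁ hC two_ne_zero w).trans_eq ?_
  rw [integral_exp_neg_sq_mul_mehlerScale_pow]
  simp only [pow_one]
  push_cast
  ring

theorem norm_fderiv_fderiv_steinSolution_add_sub_le (hD : MemLp D 3 P)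
    (hG₁ : Differentiable ℝ G) (hG₂ : Differentiable ℝ (fderiv ℝ G)) {L : ℝ≥0}
    (hL : LipschitzWith L (fderiv ℝ (fderiv ℝ G))) {K : ℝ}
    (hK : ∀ w h, ‖fderiv ℝ (fderiv ℝ G) (w + h) - fderiv ℝ (fderiv ℝ G) w‖ ≤ K * ‖h‖)
    (hmean : ∫ ω, G (D ω) ∂P = 0) (w h : E) :
    ‖fderiv ℝ (fderiv ℝ (steinSolution P D G)) (w + h) -
      fderiv ℝ (fderiv ℝ (steinSolution P D G)) w‖ ≤ ‖h‖ / 3 * K := by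
  have hD₁ : MemLp D (1 : ℕ) P := hD.mono_exponent (by norm_num)
  have growth : HasPolyGrowth 1 (fderiv ℝ (fderiv ℝ G)) := .of_lipschitzWith hL
  have fderiv_fderiv_eq x := (hasFDerivAt_fderiv_steinSolution (m := 1) (mod_cast hD) hG₁ hG₂
    hL.continuous growth hmean x).fderiv
  rw [fderiv_fderiv_eq, fderiv_fderiv_eq, neg_sub_neg]
  refine (norm_sub_rev (mehlerIntegral P D 2 (fderiv ℝ (fderiv ℝ G)) w) _).trans_le <|
    (norm_mehlerIntegral_add_sub_le hD₁ hL.continuous growth hK two_ne_zero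
      w h).trans_eq ?_
  norm_num

end SteinBounds

theorem stmt_4_general {E Ω : Type*} [NormedAddCommGroup E] [NormedSpace ℝ E] [MeasurableSpace Ω]
    {P : Measure Ω} [IsProbabilityMeasure P] {D : Ω → E} (hD : MemLp D 3 P) {g : E → ℝ}
    (hg₁ : Differentiable ℝ g) (hg₂ : Differentiable ℝ (fderiv ℝ g)) {K : ℝ≥0}
    (hK : LipschitzWith K (fderiv ℝ (fderiv ℝ g))) (hmean : ∫ ω, g (D ω) ∂P = 0) :
    (∀ w : E, ‖fderiv ℝ (steinSolution P D g) w‖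
        ≤ Mnorm g * (1 + 2 / 3 * ‖w‖ ^ 2 + 4 / 3 * ∫ ω, ‖D ω‖ ^ 2 ∂P)) ∧
    (∀ w : E, ‖fderiv ℝ (fderiv ℝ (steinSolution P D g)) w‖
        ≤ Mnorm g * (1 / 2 + ‖w‖ / 3 + (∫ ω, ‖D ω‖ ∂P) / 3)) ∧
    (∀ w h : E, ‖fderiv ℝ (fderiv ℝ (steinSolution P D g)) (w + h) -
          fderiv ℝ (fderiv ℝ (steinSolution P D g)) w‖
        ≤ ‖h‖ / 3 * ⨆ w' : E, ⨆ h' : E,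
            ‖fderiv ℝ (fderiv ℝ g) (w' + h') - fderiv ℝ (fderiv ℝ g) w'‖ / ‖h'‖) := by
  have growth₂ : HasPolyGrowth 1 (fderiv ℝ (fderiv ℝ g)) := .of_lipschitzWith hK
  have growth₁ : HasPolyGrowth 2 (fderiv ℝ g) := .of_fderiv hg₂ growth₂
  exact ⟨norm_fderiv_steinSolution_le hD hg₁ hg₂.continuous (norm_fderiv_le_Mnorm_mul growth₁)
      hmean,
    norm_fderiv_fderiv_steinSolution_le hD hg₁ hg₂ hK.continuous
      (norm_fderiv_fderiv_le_Mnorm_mul growth₂) hmean,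
    norm_fderiv_fderiv_steinSolution_add_sub_le hD hg₁ hg₂ hK (norm_add_sub_le_iSup_mul hK) hmean⟩

/-- Let `g ∈ M` with `E[g(D)] = 0` and
`φ(g)(w) = −∫₀^∞ (T_u g)(w) du`. Then for all `w, h ∈ E`:
(A) `‖Dφ(g)(w)‖ ≤ ‖g‖_M (1 + (2/3)‖w‖² + (4/3)E[‖D‖²])`;
(B) `‖D²φ(g)(w)‖ ≤ ‖g‖_M (1/2 + ‖w‖/3 + E[‖D‖]/3)`;
(C) `‖D²φ(g)(w+h) − D²φ(g)(w)‖ ≤ (‖h‖/3) · sup_{w',h'} ‖D²g(w'+h') − D²g(w')‖/‖h'‖`. -/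
theorem stmt_4 {E : Type*} [NormedAddCommGroup E] [NormedSpace ℝ E] [CompleteSpace E]
    [TopologicalSpace.SeparableSpace E]
    {Ω : Type*} [MeasureSpace Ω] [IsProbabilityMeasure (ℙ : Measure Ω)]
    (D : Ω → E) (hDmeas : AEStronglyMeasurable D ℙ)
    (hD3 : Integrable (fun ω => ‖D ω‖ ^ 3) ℙ)
    (hDmean : (∫ ω, D ω ∂ℙ) = 0)
    (g : E → ℝ)
    (hg₁ : Differentiable ℝ g)
    (hg₂ : Differentiable ℝ (fderiv ℝ g))
    (C₀ : ℝ) (hC₀ : ∀ w : E, |g w| ≤ C₀ * (1 + ‖w‖ ^ 3))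
    (kg : ℝ)
    (hkg : ∀ w h : E,
      ‖fderiv ℝ (fderiv ℝ g) (w + h) - fderiv ℝ (fderiv ℝ g) w‖ ≤ kg * ‖h‖)
    (hmean : (∫ ω, g (D ω) ∂ℙ) = 0)
    (φ : E → ℝ)
    (hφ : φ = fun w : E => -∫ u in Set.Ioi (0 : ℝ),
      ∫ ω, g (Real.exp (-u) • w + Real.sqrt (1 - Real.exp (-2 * u)) • D ω) ∂ℙ) :
    (∀ w : E, ‖fderiv ℝ φ w‖
        ≤ Mnorm g * (1 + 2 / 3 * ‖w‖ ^ 2 + 4 / 3 * ∫ ω, ‖D ω‖ ^ 2 ∂ℙ)) ∧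
    (∀ w : E, ‖fderiv ℝ (fderiv ℝ φ) w‖
        ≤ Mnorm g * (1 / 2 + ‖w‖ / 3 + (∫ ω, ‖D ω‖ ∂ℙ) / 3)) ∧
    (∀ w h : E, ‖fderiv ℝ (fderiv ℝ φ) (w + h) - fderiv ℝ (fderiv ℝ φ) w‖
        ≤ ‖h‖ / 3 * ⨆ w' : E, ⨆ h' : E,
            ‖fderiv ℝ (fderiv ℝ g) (w' + h') - fderiv ℝ (fderiv ℝ g) w'‖ / ‖h'‖) := by
  have hD : MemLp D 3 ℙ := (integrable_norm_rpow_iff hDmeas (by simp) (by simp)).1 (by simpa)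
  have hK : LipschitzWith kg.toNNReal (fderiv ℝ (fderiv ℝ g)) := .of_dist_le' fun x y => by
    simpa [dist_eq_norm] using hkg y (x - y)
  exact hφ ▸ stmt_4_general hD hg₁ hg₂ hK hmean
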